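/- arXiv:1602.03567 — 2 statements merged into one kernel-verified Lean document; each statement's English description precedes it below -/
import Mathlib

section
/- (Lemma 2.3.) Let k ≥ 1, let x ∈ A_k, and let d = dist(x, y) for some y ∈ A_k with c − 2R·r_max^k − 2R·r_max^{k+1} ≤ d ≤ c/r_min. Then there exists d' ∈ [d − R·r_max^k, d] such that μ_k(B(x,d)) ≥ μ(B(x,d')). -/
/-!
The radius `d' = dist x y - R * rmax ^ (k + 1)` works. Iterating the self-similarity of `μ`
(`measure_eq_sum_words`) gives `μ A = ∑_w r_w ^ s * μ (f_w⁻¹ A)` over words of length `k + 1`.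
For `A = ball x d'`, a word contributes only if `f_w⁻¹ A` meets `E`, because `μ` is carried by `E`;
it then contributes at most `r_w ^ s`. In that case the cylinder `f_w(E)`, whose diameter is at most
`R * rmax ^ (k + 1)`, meets `ball x d'`, so all of it lies in `ball x (dist x y)`. In particular
the atom of the discrete measure attached to `w`, which lies in `f_w(E)` since the fixed points
lie in `E`, is counted there with the same weight `r_w ^ s`.
-/


open MeasureTheory Metric Set

noncomputable section

/-- Composition of the maps of the IFS along a word (list of letters). -/
def fword {m : ℕ} {X : Type*} (f : Fin m → X → X) : List (Fin m) → X → X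
  | [] => id
  | i :: w => f i ∘ fword f w

/-- Product of the contraction ratios along a word. -/
def rword {m : ℕ} (r : Fin m → ℝ) (w : List (Fin m)) : ℝ := (w.map r).prod

/-- The point clouds: `cloud f p k` is the set `A_{k+1}` of the paper
(`cloud f p 0 = A₁` is the set of fixed points). -/
def cloud {m : ℕ} {X : Type*} (f : Fin m → X → X) (p : Fin m → X) : ℕ → Set X
  | 0 => Set.range p
  | k + 1 => ⋃ i, f i '' cloud f p k

/-- The discrete measure: `muk f p r s k` is the measure `μ_{k+1}` of the paper,
supported on `cloud f p k = A_{k+1}`. -/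
def muk {m : ℕ} {X : Type*} [MeasurableSpace X] (f : Fin m → X → X) (p : Fin m → X)
    (r : Fin m → ℝ) (s : ℝ) (k : ℕ) : Measure X :=
  ∑ w : Fin (k + 1) → Fin m,
    ENNReal.ofReal ((∏ j, r (w j)) ^ s) •
      Measure.dirac (fword f (List.ofFn w) (p (w (Fin.last k))))

theorem continuous_fword {m : ℕ} {X : Type*} [TopologicalSpace X] {f : Fin m → X → X}
    (hf : ∀ i, Continuous (f i)) : ∀ w : List (Fin m), Continuous (fword f w)
  | [] => continuous_id
  | i :: w => (hf i).comp (continuous_fword hf w)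

theorem dist_fword {m : ℕ} {X : Type*} [PseudoMetricSpace X] {f : Fin m → X → X} {r : Fin m → ℝ}
    (hsim : ∀ i x y, dist (f i x) (f i y) = r i * dist x y) (w : List (Fin m)) (x y : X) :
    dist (fword f w x) (fword f w y) = (w.map r).prod * dist x y := by
  induction w with
  | nil => simp [fword]
  | cons i w ih => simp [fword, hsim, ih, mul_assoc]

/-- The self-similarity identity of `μ` iterated `k` times. -/
theorem measure_eq_sum_words {m : ℕ} {X : Type*} [TopologicalSpace X] [MeasurableSpace X]
    [BorelSpace X] {f : Fin m → X → X} (hf : ∀ i, Continuous (f i)) {r : Fin m → ℝ}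
    (hr : ∀ i, 0 ≤ r i) {s : ℝ} {μ : Measure X}
    (hμself : ∀ A : Set X, MeasurableSet A →
      μ A = ∑ i, ENNReal.ofReal (r i ^ s) * μ (f i ⁻¹' A)) (k : ℕ) :
    ∀ A : Set X, MeasurableSet A →
      μ A = ∑ w : Fin k → Fin m,
        ENNReal.ofReal ((∏ j, r (w j)) ^ s) * μ (fword f (List.ofFn w) ⁻¹' A) := by
  induction k with
  | zero => intro A _; simp [fword]
  | succ k ih =>
    intro A hA
    rw [← (Fin.consEquiv fun _ : Fin (k + 1) => Fin m).sum_comp, Fintype.sum_prod_type,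
      hμself A hA]
    refine Finset.sum_congr rfl fun i _ => ?_
    rw [ih _ ((hf i).measurable hA), Finset.mul_sum]
    refine Finset.sum_congr rfl fun w _ => ?_
    have h : fword f (List.ofFn (Fin.cons i w : Fin (k + 1) → Fin m)) =
        f i ∘ fword f (List.ofFn w) := by
      simp [List.ofFn_succ, fword]
    change _ = ENNReal.ofReal ((∏ j, r ((Fin.cons i w : Fin (k + 1) → Fin m) j)) ^ s) *
      μ (fword f (List.ofFn (Fin.cons i w : Fin (k + 1) → Fin m)) ⁻¹' A)
    rw [h, Fin.prod_univ_succ, ← mul_assoc, Set.preimage_comp]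
    simp only [Fin.cons_zero, Fin.cons_succ]
    rw [Real.mul_rpow (hr i) (Finset.prod_nonneg fun j _ => hr _),
      ENNReal.ofReal_mul (Real.rpow_nonneg (hr i) s)]

/-- A fixed point of a strict contraction lies in every nonempty compact set that the contraction
maps to itself: a point of the set nearest to it cannot be at positive distance. -/
theorem fixedPoint_mem {X : Type*} [MetricSpace X] {g : X → X} {a : ℝ} (ha : a < 1)
    (hg : ∀ x y, dist (g x) (g y) = a * dist x y) {E : Set X} (hne : E.Nonempty)
    (hE : IsCompact E) (hmaps : ∀ x ∈ E, g x ∈ E) {q : X} (hq : g q = q) : q ∈ E := by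
  obtain ⟨e, he, hmin⟩ := hE.exists_isMinOn hne (f := fun e => dist q e)
    (continuous_const.dist continuous_id).continuousOn
  have h1 : dist q e ≤ dist q (g e) := hmin (hmaps e he)
  have h2 := hg q e
  rw [hq] at h2
  have h3 : dist q e = 0 := by
    have := dist_nonneg (x := q) (y := e)
    nlinarith
  rwa [dist_eq_zero.1 h3]

theorem stmt6
    (n m : ℕ) (hn : 1 ≤ n) (hm : 2 ≤ m)
    (f : Fin m → EuclideanSpace ℝ (Fin n) → EuclideanSpace ℝ (Fin n))
    (r : Fin m → ℝ) (hr : ∀ i, r i ∈ Set.Ioo (0 : ℝ) 1)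
    (hsim : ∀ i x y, dist (f i x) (f i y) = r i * dist x y)
    (E : Set (EuclideanSpace ℝ (Fin n)))
    (hEne : E.Nonempty) (hEcpt : IsCompact E)
    (hEinv : E = ⋃ i, f i '' E)
    (hssc : ∀ i j, i ≠ j → f i '' E ∩ f j '' E = ∅)
    (s : ℝ) (hs : 0 < s) (hsum : ∑ i, r i ^ s = 1)
    (μ : Measure (EuclideanSpace ℝ (Fin n)))
    (hμprob : IsProbabilityMeasure μ) (hμE : μ E = 1)
    (hμself : ∀ A : Set (EuclideanSpace ℝ (Fin n)), MeasurableSet A →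
      μ A = ∑ i, ENNReal.ofReal (r i ^ s) * μ (f i ⁻¹' A))
    (p : Fin m → EuclideanSpace ℝ (Fin n)) (hp : ∀ i, f i (p i) = p i)
    (rmin rmax : ℝ)
    (hrmin₁ : ∃ i, rmin = r i) (hrmin₂ : ∀ i, rmin ≤ r i)
    (hrmax₁ : ∃ i, rmax = r i) (hrmax₂ : ∀ i, r i ≤ rmax)
    (c R : ℝ) (hcpos : 0 < c)
    (hc : c = sInf {d : ℝ | ∃ i j, i ≠ j ∧ ∃ x ∈ f i '' E, ∃ y ∈ f j '' E, d = dist x y})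
    (hR : R = Metric.diam E) :
    ∀ k : ℕ, ∀ x ∈ cloud f p k, ∀ y ∈ cloud f p k,
      c - 2 * R * rmax ^ (k + 1) - 2 * R * rmax ^ (k + 2) ≤ dist x y → dist x y ≤ c / rmin →
      ∃ d' ∈ Set.Icc (dist x y - R * rmax ^ (k + 1)) (dist x y),
        μ (Metric.ball x d') ≤ muk f p r s k (Metric.ball x (dist x y)) := by
  intro k x _ y _ _ _
  have hf : ∀ i, Continuous (f i) := fun i =>
    (LipschitzWith.of_dist_le_mul (K := ⟨r i, (hr i).1.le⟩) fun a b => (hsim i a b).le).continuous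
  have hmaps : ∀ i, ∀ a ∈ E, f i a ∈ E := fun i a ha => by
    rw [hEinv]
    exact Set.mem_iUnion.2 ⟨i, a, ha, rfl⟩
  have hpE : ∀ i, p i ∈ E := fun i =>
    fixedPoint_mem (hr i).2 (hsim i) hEne hEcpt (hmaps i) (hp i)
  have hR0 : 0 ≤ R := hR ▸ Metric.diam_nonneg
  have hrmax0 : 0 ≤ rmax := by
    obtain ⟨i, hi⟩ := hrmax₁
    exact hi ▸ (hr i).1.le
  have hEc : μ Eᶜ = 0 := (prob_compl_eq_zero_iff hEcpt.measurableSet).2 hμE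
  refine ⟨dist x y - R * rmax ^ (k + 1), ⟨le_rfl, sub_le_self _ (by positivity)⟩, ?_⟩
  rw [measure_eq_sum_words hf (fun i => (hr i).1.le) hμself (k + 1) _ measurableSet_ball]
  simp only [muk, Measure.coe_finsetSum, Finset.sum_apply, Measure.smul_apply, smul_eq_mul]
  refine Finset.sum_le_sum fun w _ => ?_
  refine mul_le_mul_right ?_ _
  by_cases hw : ∃ z ∈ E, fword f (List.ofFn w) z ∈ ball x (dist x y - R * rmax ^ (k + 1))
  · obtain ⟨z, hz, hzb⟩ := hw
    -- The whole cylinder of `w` lies in the larger ball, in particular the atom of `w`.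
    have hmem : fword f (List.ofFn w) (p (w (Fin.last k))) ∈ ball x (dist x y) := by
      have h1 := dist_fword hsim (List.ofFn w) (p (w (Fin.last k))) z
      have h2 : ((List.ofFn w).map r).prod ≤ rmax ^ (k + 1) := by
        rw [List.map_ofFn, List.prod_ofFn]
        calc ∏ j, (r ∘ w) j ≤ ∏ _j : Fin (k + 1), rmax :=
              Finset.prod_le_prod (fun j _ => (hr _).1.le) fun j _ => hrmax₂ _
          _ = rmax ^ (k + 1) := by simp
      have h3 : dist (p (w (Fin.last k))) z ≤ R :=
        hR ▸ Metric.dist_le_diam_of_mem hEcpt.isBounded (hpE _) hz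
      have h4 : ((List.ofFn w).map r).prod * dist (p (w (Fin.last k))) z ≤
          rmax ^ (k + 1) * R := by
        gcongr
      rw [mem_ball] at hzb ⊢
      have h5 := dist_triangle (fword f (List.ofFn w) (p (w (Fin.last k))))
        (fword f (List.ofFn w) z) x
      linarith
    rw [Measure.dirac_apply_of_mem hmem]
    exact prob_le_one
  · -- The preimage of the small ball misses `E`, hence is a null set.
    push Not at hw
    have h0 : μ (fword f (List.ofFn w) ⁻¹' ball x (dist x y - R * rmax ^ (k + 1))) = 0 :=
      measure_mono_null (fun z hz hzE => hw z hzE hz) hEc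
    rw [h0]
    exact zero_le
end
end

section
/- (Theorem 2, stated via the density characterization of the centered Hausdorff measure.) Let k ≥ 1, let q ≥ 1 be the integer with R·r_max^q ≤ c < R·r_max^{q−1}, and set ϵ_k := s·2^{s+1}·R·𝒬·r_max^k / r_min^{q·s}, where 𝒬 := R^{s−1} if s ≥ 1 and 𝒬 := c^{s−1} if s < 1. Define the algorithm output m̃_k := inf{ (2d)^s/μ_k(B̄(x,d)) : x ∈ A_k, d = dist(x,y) for some y ∈ A_k, and there exists z ∈ A_k ∩ B̄(x,d) with i₁^z ≠ i₁^x }. Assume C ∈ ℝ satisfies C = inf{ (2d)^s/μ(B̄(x,d)) : (x,d) ∈ 𝒜 } and that this infimum is attained at some (x₀,d₀) ∈ 𝒜. (By results of [LLM1], the s-dimensional centered Hausdorff measure C^s(E) has these properties.) Then |C − m̃_k| ≤ ϵ_k. -/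
/-!
Write `ε = R * rmax ^ (k + 1)`, which bounds the diameter of every cylinder of level `k + 1`, and
`δ = rmin ^ (q * s)`. The discrete measure arises from `μ` by concentrating the mass of each such
cylinder at one of its points, so mass moves by at most `ε`. Both measures satisfy the same
self-similarity recursion, which reduces the comparison of masses of balls (`measure_le_muk`) to an
induction on `k` without any reference to words. Since `R * rmax ^ q ≤ c`, every ball of radius at
least `c` centred at a point of `E` (resp. of the cloud) contains a cylinder of level `q` or an
atom, and so has mass at least `δ` (`measure_lower`, `muk_lower`).

* Upper bound for `C`: for an admissible discrete pair `(x, d)`, the pair `(x, min (d + ε) R)`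
  belongs to `𝒜`, and its ball has `μ`-mass at least the discrete mass of the original ball.
* Upper bound for the discrete infimum: for the minimizing `(x₀, d₀)`, choose a cloud point `x` in
  the cylinder of `x₀` and let `d` be the largest distance from `x` to a cloud point within
  `d₀ + 2 * ε`. Then `(x, d)` is admissible and the discrete mass of its ball is at least the
  `μ`-mass of the ball around `x₀`.

In both cases the radius grows by at most `2 * ε` and stays in `[c, R]`, and the mean value theorem
for `t ↦ (2 * t) ^ s` (`two_mul_rpow_sub_le`), divided by the mass bound `δ`, gives the estimate.
-/


open MeasureTheory Metric Set

noncomputable section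

/-! ### The point clouds -/

section Clouds

variable {m : ℕ} {X : Type*} {f : Fin m → X → X} {E : Set X} {p : Fin m → X}

theorem cloud_subset (hmaps : ∀ i, ∀ x ∈ E, f i x ∈ E) (hpE : ∀ i, p i ∈ E) (k : ℕ) :
    cloud f p k ⊆ E := by
  induction k with
  | zero => rintro _ ⟨i, rfl⟩; exact hpE i
  | succ k ih =>
    intro x hx
    obtain ⟨i, y, hy, rfl⟩ := Set.mem_iUnion.1 hx
    exact hmaps i y (ih hy)

theorem cloud_finite (k : ℕ) : (cloud f p k).Finite := by
  induction k with
  | zero => exact Set.finite_range p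
  | succ k ih => exact Set.finite_iUnion fun i => ih.image _

end Clouds

section Geometry

variable {m : ℕ} {X : Type*} [MetricSpace X]
  {f : Fin m → X → X} {r : Fin m → ℝ} {E : Set X} {p : Fin m → X}

theorem continuous_of_sim (hr : ∀ i, r i ∈ Set.Ioo (0 : ℝ) 1)
    (hsim : ∀ i x y, dist (f i x) (f i y) = r i * dist x y) (i : Fin m) : Continuous (f i) :=
  (LipschitzWith.of_dist_le_mul (K := ⟨r i, (hr i).1.le⟩)
    (fun x y => (hsim i x y).le)).continuous

/-- A fixed point lies in `E`: a point of `E` nearest to it is moved strictly closer by `f i`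
unless it is the fixed point itself. -/
theorem fixed_mem (hr : ∀ i, r i ∈ Set.Ioo (0 : ℝ) 1)
    (hsim : ∀ i x y, dist (f i x) (f i y) = r i * dist x y)
    (hEne : E.Nonempty) (hEcpt : IsCompact E) (hmaps : ∀ i, ∀ x ∈ E, f i x ∈ E)
    (hp : ∀ i, f i (p i) = p i) (i : Fin m) : p i ∈ E := by
  obtain ⟨e, he, hmin⟩ := hEcpt.exists_isMinOn hEne
    (f := fun x => dist (p i) x) (by fun_prop)
  have h1 : dist (p i) e ≤ dist (p i) (f i e) := hmin (hmaps i e he)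
  have h2 := hsim i (p i) e
  rw [hp i] at h2
  have h3 : dist (p i) e = 0 := by
    have := dist_nonneg (x := p i) (y := e)
    nlinarith [(hr i).2]
  rw [dist_eq_zero.1 h3]
  exact he

/-- Every point of `E` is within the uniform cylinder bound `R * rmax ^ (k + 1)` of a cloud point
lying in the same first-level piece. -/
theorem exists_cloud_near {rmax R : ℝ} (hr : ∀ i, r i ∈ Set.Ioo (0 : ℝ) 1)
    (hsim : ∀ i x y, dist (f i x) (f i y) = r i * dist x y)
    (hrmax : ∀ i, r i ≤ rmax) (hE : E = ⋃ i, f i '' E)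
    (hp : ∀ i, f i (p i) = p i) (hpE : ∀ i, p i ∈ E)
    (hmaps : ∀ i, ∀ x ∈ E, f i x ∈ E)
    (hdist : ∀ x ∈ E, ∀ y ∈ E, dist x y ≤ R) (k : ℕ) :
    ∀ x ∈ E, ∃ y ∈ cloud f p k, dist x y ≤ R * rmax ^ (k + 1) ∧
      ∃ i, x ∈ f i '' E ∧ y ∈ f i '' E := by
  induction k with
  | zero =>
    intro x hx
    rw [hE] at hx
    obtain ⟨i, u, hu, rfl⟩ := Set.mem_iUnion.1 hx
    refine ⟨p i, ⟨i, rfl⟩, ?_, i, ⟨u, hu, rfl⟩, ⟨p i, hpE i, hp i⟩⟩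
    calc dist (f i u) (p i) = r i * dist u (p i) := by rw [← hsim, hp]
      _ ≤ rmax * R := mul_le_mul (hrmax i) (hdist _ hu _ (hpE i)) dist_nonneg
          ((hr i).1.le.trans (hrmax i))
      _ = R * rmax ^ (0 + 1) := by ring
  | succ k ih =>
    intro x hx
    rw [hE] at hx
    obtain ⟨i, u, hu, rfl⟩ := Set.mem_iUnion.1 hx
    obtain ⟨v, hv, hd, -⟩ := ih u hu
    refine ⟨f i v, Set.mem_iUnion.2 ⟨i, v, hv, rfl⟩, ?_, i, ⟨u, hu, rfl⟩,
      ⟨v, cloud_subset hmaps hpE k hv, rfl⟩⟩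
    calc dist (f i u) (f i v) = r i * dist u v := hsim _ _ _
      _ ≤ rmax * (R * rmax ^ (k + 1)) := mul_le_mul (hrmax i) hd dist_nonneg
          ((hr i).1.le.trans (hrmax i))
      _ = R * rmax ^ (k + 1 + 1) := by ring

end Geometry

/-! ### The discrete measures and the natural measure -/

section Measures

variable {m : ℕ} {X : Type*} [MeasurableSpace X]
  {f : Fin m → X → X} {r : Fin m → ℝ} {E : Set X} {p : Fin m → X} {s : ℝ}

theorem muk_zero (hp : ∀ i, f i (p i) = p i) {A : Set X} (hA : MeasurableSet A) :
    muk f p r s 0 A = ∑ i, ENNReal.ofReal (r i ^ s) * A.indicator 1 (p i) := by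
  simp only [muk, Measure.coe_finsetSum, Finset.sum_apply, Measure.smul_apply, smul_eq_mul]
  refine Fintype.sum_equiv (Equiv.funUnique (Fin 1) (Fin m)) _ _ fun w => ?_
  rw [Measure.dirac_apply' _ hA]
  simp [fword, List.ofFn_succ, hp]

variable [MetricSpace X] [BorelSpace X]

/-- The discrete measures satisfy the self-similarity recursion, which is obtained by splitting
off the first letter of a word. -/
theorem muk_succ (hr : ∀ i, r i ∈ Set.Ioo (0 : ℝ) 1) (hf : ∀ i, Continuous (f i)) (k : ℕ)
    {A : Set X} (hA : MeasurableSet A) :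
    muk f p r s (k + 1) A = ∑ i, ENNReal.ofReal (r i ^ s) * muk f p r s k (f i ⁻¹' A) := by
  simp only [muk, Measure.coe_finsetSum, Finset.sum_apply, Measure.smul_apply, smul_eq_mul]
  rw [← (Fin.consEquiv fun _ : Fin (k + 2) => Fin m).sum_comp, Fintype.sum_prod_type]
  refine Finset.sum_congr rfl fun i _ => ?_
  rw [Finset.mul_sum]
  refine Finset.sum_congr rfl fun w _ => ?_
  rw [Measure.dirac_apply' _ hA, Measure.dirac_apply' _ ((hf i).measurable hA), ← mul_assoc,
    ← ENNReal.ofReal_mul (Real.rpow_nonneg (hr i).1.le _),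
    ← Real.mul_rpow (hr i).1.le (Finset.prod_nonneg fun j _ => (hr _).1.le)]
  have h1 : ∏ j, r (Fin.consEquiv (fun _ : Fin (k + 2) => Fin m) (i, w) j)
      = r i * ∏ j, r (w j) := by
    rw [Fin.prod_univ_succ]; simp [Fin.consEquiv]
  have h2 : fword f (List.ofFn (Fin.consEquiv (fun _ : Fin (k + 2) => Fin m) (i, w)))
      (p (Fin.consEquiv (fun _ : Fin (k + 2) => Fin m) (i, w) (Fin.last (k + 1))))
      = f i (fword f (List.ofFn w) (p (w (Fin.last k)))) := by
    rw [List.ofFn_succ, ← Fin.succ_last]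
    simp only [Fin.consEquiv_apply, Fin.cons_zero, Fin.cons_succ, fword, Function.comp]
  rw [h1, h2]
  rfl

theorem sum_weights (hr : ∀ i, r i ∈ Set.Ioo (0 : ℝ) 1) (hsum : ∑ i, r i ^ s = 1) :
    ∑ i, ENNReal.ofReal (r i ^ s) = 1 := by
  rw [← ENNReal.ofReal_sum_of_nonneg fun i _ => Real.rpow_nonneg (hr i).1.le _, hsum,
    ENNReal.ofReal_one]

theorem muk_univ (hr : ∀ i, r i ∈ Set.Ioo (0 : ℝ) 1) (hf : ∀ i, Continuous (f i))
    (hsum : ∑ i, r i ^ s = 1) (hp : ∀ i, f i (p i) = p i) (k : ℕ) :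
    muk f p r s k Set.univ = 1 := by
  induction k with
  | zero => simp [muk_zero hp MeasurableSet.univ, sum_weights hr hsum]
  | succ k ih => simp [muk_succ hr hf k MeasurableSet.univ, ih, sum_weights hr hsum]

theorem muk_eq_zero (hr : ∀ i, r i ∈ Set.Ioo (0 : ℝ) 1) (hf : ∀ i, Continuous (f i))
    (hp : ∀ i, f i (p i) = p i) (k : ℕ) : ∀ A : Set X, MeasurableSet A →
    (∀ x ∈ cloud f p k, x ∉ A) → muk f p r s k A = 0 := by
  induction k with
  | zero =>
    intro A hA h
    rw [muk_zero hp hA]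
    refine Finset.sum_eq_zero fun i _ => ?_
    rw [Set.indicator_of_notMem (h _ ⟨i, rfl⟩), mul_zero]
  | succ k ih =>
    intro A hA h
    rw [muk_succ hr hf k hA]
    refine Finset.sum_eq_zero fun i _ => ?_
    rw [ih _ ((hf i).measurable hA) fun x hx hxA =>
      h (f i x) (Set.mem_iUnion.2 ⟨i, x, hx, rfl⟩) hxA, mul_zero]

/-- The discretization moves mass by at most `R * rmax ^ (k + 1)`: a set `T` containing all points
of `E` within that distance of `S ∩ E` has at least as much discrete mass as `S` has mass. -/
theorem measure_le_muk {rmax R : ℝ} {μ : Measure X}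
    (hr : ∀ i, r i ∈ Set.Ioo (0 : ℝ) 1) (hf : ∀ i, Continuous (f i))
    (hsim : ∀ i x y, dist (f i x) (f i y) = r i * dist x y)
    (hrmax : ∀ i, r i ≤ rmax)
    (hp : ∀ i, f i (p i) = p i) (hpE : ∀ i, p i ∈ E)
    (hmaps : ∀ i, ∀ x ∈ E, f i x ∈ E)
    (hdist : ∀ x ∈ E, ∀ y ∈ E, dist x y ≤ R)
    (hμprob : IsProbabilityMeasure μ) (hμE : μ Eᶜ = 0)
    (hμself : ∀ A : Set X, MeasurableSet A →
      μ A = ∑ i, ENNReal.ofReal (r i ^ s) * μ (f i ⁻¹' A)) (k : ℕ) :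
    ∀ S T : Set X, MeasurableSet S → MeasurableSet T →
      (∀ u ∈ S, u ∈ E → ∀ v ∈ E, dist u v ≤ R * rmax ^ (k + 1) → v ∈ T) →
      μ S ≤ muk f p r s k T := by
  induction k with
  | zero =>
    intro S T hS hT h
    rw [hμself S hS, muk_zero hp hT]
    refine Finset.sum_le_sum fun i _ => mul_le_mul_right ?_ _
    by_cases hne : ∃ u ∈ E, f i u ∈ S
    · obtain ⟨u, hu, huS⟩ := hne
      have : p i ∈ T := by
        refine h _ huS (hmaps i u hu) _ (hpE i) ?_
        calc dist (f i u) (p i) = r i * dist u (p i) := by rw [← hsim, hp]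
          _ ≤ rmax * R := mul_le_mul (hrmax i) (hdist _ hu _ (hpE i)) dist_nonneg
              ((hr i).1.le.trans (hrmax i))
          _ = R * rmax ^ (0 + 1) := by ring
      rw [Set.indicator_of_mem this]
      exact prob_le_one
    · have : μ (f i ⁻¹' S) = 0 :=
        measure_mono_null (fun u hu huE => hne ⟨u, huE, hu⟩) hμE
      rw [this]; exact zero_le
  | succ k ih =>
    intro S T hS hT h
    rw [hμself S hS, muk_succ hr hf k hT]
    refine Finset.sum_le_sum fun i _ => mul_le_mul_right ?_ _
    refine ih _ _ ((hf i).measurable hS) ((hf i).measurable hT) fun u hu huE v hv hd =>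
      h _ hu (hmaps i u huE) _ (hmaps i v hv) ?_
    calc dist (f i u) (f i v) = r i * dist u v := hsim _ _ _
      _ ≤ rmax * (R * rmax ^ (k + 1)) := mul_le_mul (hrmax i) hd dist_nonneg
          ((hr i).1.le.trans (hrmax i))
      _ = R * rmax ^ (k + 1 + 1) := by ring

/-- One step of the mass lower bounds: a compact set around `y` of radius `ρ` and mass at least
`δ ^ q` is carried by `f i` to one around `f i y` of radius `ρ * rmax` and mass at least
`δ ^ (q + 1)`, where `ν'` is the measure obtained from `ν` by the self-similarity relation. -/
theorem image_mass {rmax ρ : ℝ} {δ : ENNReal} {ν ν' : Measure X} {q : ℕ}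
    (hr : ∀ i, r i ∈ Set.Ioo (0 : ℝ) 1) (hf : ∀ i, Continuous (f i))
    (hsim : ∀ i x y, dist (f i x) (f i y) = r i * dist x y)
    (hrmax : ∀ i, r i ≤ rmax) (hδ : ∀ i, δ ≤ ENNReal.ofReal (r i ^ s))
    (hν : ∀ A : Set X, MeasurableSet A →
      ν' A = ∑ i, ENNReal.ofReal (r i ^ s) * ν (f i ⁻¹' A)) (i : Fin m) {y : X}
    (h : ∃ T : Set X, IsCompact T ∧ (∀ z ∈ T, dist z y ≤ ρ) ∧ δ ^ q ≤ ν T) :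
    ∃ T : Set X, IsCompact T ∧ (∀ z ∈ T, dist z (f i y) ≤ ρ * rmax) ∧ δ ^ (q + 1) ≤ ν' T := by
  obtain ⟨T, hT, hTd, hTm⟩ := h
  refine ⟨f i '' T, hT.image (hf i), ?_, ?_⟩
  · rintro _ ⟨z, hz, rfl⟩
    rw [hsim, mul_comm]
    exact mul_le_mul (hTd z hz) (hrmax i) (hr i).1.le (dist_nonneg.trans (hTd z hz))
  · rw [hν _ (hT.image (hf i)).measurableSet, pow_succ']
    calc δ * δ ^ q ≤ ENNReal.ofReal (r i ^ s) * ν (f i ⁻¹' (f i '' T)) :=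
          mul_le_mul' (hδ i) (hTm.trans (measure_mono (Set.subset_preimage_image _ _)))
      _ ≤ _ := Finset.single_le_sum
          (f := fun j => ENNReal.ofReal (r j ^ s) * ν (f j ⁻¹' (f i '' T)))
          (fun _ _ => zero_le) (Finset.mem_univ i)

theorem measure_lower {rmax R : ℝ} {δ : ENNReal} {μ : Measure X}
    (hr : ∀ i, r i ∈ Set.Ioo (0 : ℝ) 1) (hf : ∀ i, Continuous (f i))
    (hsim : ∀ i x y, dist (f i x) (f i y) = r i * dist x y)
    (hrmax : ∀ i, r i ≤ rmax) (hδ : ∀ i, δ ≤ ENNReal.ofReal (r i ^ s))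
    (hEcpt : IsCompact E) (hE : E = ⋃ i, f i '' E)
    (hdist : ∀ x ∈ E, ∀ y ∈ E, dist x y ≤ R) (hμE : μ E = 1)
    (hμself : ∀ A : Set X, MeasurableSet A →
      μ A = ∑ i, ENNReal.ofReal (r i ^ s) * μ (f i ⁻¹' A)) (q : ℕ) :
    ∀ x ∈ E, ∃ T : Set X, IsCompact T ∧ (∀ z ∈ T, dist z x ≤ R * rmax ^ q) ∧ δ ^ q ≤ μ T := by
  induction q with
  | zero => exact fun x hx => ⟨E, hEcpt, fun z hz => by simpa using hdist z hz x hx, by simp [hμE]⟩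
  | succ q ih =>
    intro x hx
    rw [hE] at hx
    obtain ⟨i, u, hu, rfl⟩ := Set.mem_iUnion.1 hx
    have := image_mass hr hf hsim hrmax hδ hμself i (ih u hu)
    rwa [mul_assoc, ← pow_succ] at this

/-- The discrete counterpart of `measure_lower`. When `q` is at least the word length `k + 1`,
the recursion ends at the atom `x` itself. -/
theorem muk_lower {rmax R : ℝ} {δ : ENNReal} (hδ1 : δ ≤ 1) (hR : 0 ≤ R) (hm0 : 0 ≤ rmax)
    (hr : ∀ i, r i ∈ Set.Ioo (0 : ℝ) 1) (hf : ∀ i, Continuous (f i))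
    (hsim : ∀ i x y, dist (f i x) (f i y) = r i * dist x y)
    (hrmax : ∀ i, r i ≤ rmax) (hδ : ∀ i, δ ≤ ENNReal.ofReal (r i ^ s))
    (hsum : ∑ i, r i ^ s = 1) (hp : ∀ i, f i (p i) = p i) (hpE : ∀ i, p i ∈ E)
    (hmaps : ∀ i, ∀ x ∈ E, f i x ∈ E)
    (hEcpt : IsCompact E) (hdist : ∀ x ∈ E, ∀ y ∈ E, dist x y ≤ R) (q : ℕ) :
    ∀ k, ∀ x ∈ cloud f p k, ∃ T : Set X, IsCompact T ∧ (∀ z ∈ T, dist z x ≤ R * rmax ^ q) ∧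
      δ ^ q ≤ muk f p r s k T := by
  induction q with
  | zero =>
    intro k x hx
    refine ⟨E, hEcpt, fun z hz => by simpa using hdist z hz x (cloud_subset hmaps hpE k hx), ?_⟩
    have h0 : muk f p r s k Eᶜ = 0 := muk_eq_zero hr hf hp k _ hEcpt.measurableSet.compl
      fun x hx h => h (cloud_subset hmaps hpE k hx)
    rw [pow_zero, ← muk_univ hr hf hsum hp k, ← measure_add_measure_compl hEcpt.measurableSet, h0,
      add_zero]
  | succ q ih =>
    rintro (_ | k) x hx
    · obtain ⟨i, rfl⟩ := hx
      refine ⟨{p i}, isCompact_singleton, ?_, ?_⟩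
      · rintro z rfl
        rw [dist_self]; positivity
      · rw [muk_zero hp (measurableSet_singleton _)]
        calc δ ^ (q + 1) ≤ δ := pow_le_of_le_one zero_le hδ1 (by omega)
          _ ≤ ENNReal.ofReal (r i ^ s) * Set.indicator {p i} 1 (p i) := by simpa using hδ i
          _ ≤ _ := Finset.single_le_sum
              (f := fun j => ENNReal.ofReal (r j ^ s) * Set.indicator {p i} 1 (p j))
              (fun _ _ => zero_le) (Finset.mem_univ i)
    · obtain ⟨i, u, hu, rfl⟩ := Set.mem_iUnion.1 hx
      have := image_mass hr hf hsim hrmax hδ (fun A hA => muk_succ hr hf k hA) i (ih k u hu)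
      rwa [mul_assoc, ← pow_succ] at this

end Measures

/-! ### The error estimate -/

/-- The mean value bound for `t ↦ (2 t) ^ s` on `[c, R]`. -/
theorem two_mul_rpow_sub_le {s c R a b : ℝ} (hs : 0 < s) (hc : 0 < c) (ha : c ≤ a) (hab : a ≤ b)
    (hb : b ≤ R) :
    (2 * b) ^ s - (2 * a) ^ s ≤
      2 ^ s * (s * (if 1 ≤ s then R ^ (s - 1) else c ^ (s - 1)) * (b - a)) := by
  rw [Real.mul_rpow (by norm_num) (by linarith), Real.mul_rpow (by norm_num) (by linarith),
    ← mul_sub]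
  refine mul_le_mul_of_nonneg_left ?_ (by positivity)
  rcases hab.eq_or_lt with rfl | hlt
  · simp
  obtain ⟨ξ, hξ, h⟩ := exists_hasDerivAt_eq_slope (fun t : ℝ => t ^ s)
    (fun t => s * t ^ (s - 1)) hlt
    (fun t ht => (Real.continuousAt_rpow_const _ _ (Or.inr hs.le)).continuousWithinAt)
    (fun t ht => Real.hasDerivAt_rpow_const (Or.inl (by linarith [ht.1])))
  rw [eq_div_iff (by linarith)] at h
  rw [← h]
  refine mul_le_mul_of_nonneg_right (mul_le_mul_of_nonneg_left ?_ hs.le) (by linarith)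
  split_ifs with h1
  · exact Real.rpow_le_rpow (by linarith [hξ.1]) (by linarith [hξ.2]) (by linarith)
  · exact Real.rpow_le_rpow_of_nonpos hc (by linarith [hξ.1]) (by linarith)

theorem stmt17
    (n m : ℕ) (hn : 1 ≤ n) (hm : 2 ≤ m)
    (f : Fin m → EuclideanSpace ℝ (Fin n) → EuclideanSpace ℝ (Fin n))
    (r : Fin m → ℝ) (hr : ∀ i, r i ∈ Set.Ioo (0 : ℝ) 1)
    (hsim : ∀ i x y, dist (f i x) (f i y) = r i * dist x y)
    (E : Set (EuclideanSpace ℝ (Fin n)))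
    (hEne : E.Nonempty) (hEcpt : IsCompact E)
    (hEinv : E = ⋃ i, f i '' E)
    (hssc : ∀ i j, i ≠ j → f i '' E ∩ f j '' E = ∅)
    (s : ℝ) (hs : 0 < s) (hsum : ∑ i, r i ^ s = 1)
    (μ : Measure (EuclideanSpace ℝ (Fin n)))
    (hμprob : IsProbabilityMeasure μ) (hμE : μ E = 1)
    (hμself : ∀ A : Set (EuclideanSpace ℝ (Fin n)), MeasurableSet A →
      μ A = ∑ i, ENNReal.ofReal (r i ^ s) * μ (f i ⁻¹' A))
    (p : Fin m → EuclideanSpace ℝ (Fin n)) (hp : ∀ i, f i (p i) = p i)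
    (rmin rmax : ℝ)
    (hrmin₁ : ∃ i, rmin = r i) (hrmin₂ : ∀ i, rmin ≤ r i)
    (hrmax₁ : ∃ i, rmax = r i) (hrmax₂ : ∀ i, r i ≤ rmax)
    (c R : ℝ) (hcpos : 0 < c)
    (hc : c = sInf {d : ℝ | ∃ i j, i ≠ j ∧ ∃ x ∈ f i '' E, ∃ y ∈ f j '' E, d = dist x y})
    (hR : R = Metric.diam E)
    (ι : EuclideanSpace ℝ (Fin n) → Fin m)
    (hι : ∀ x ∈ E, x ∈ f (ι x) '' E)
    (k q : ℕ) (hq1 : 1 ≤ q)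
    (hqdef : R * rmax ^ q ≤ c ∧ c < R * rmax ^ (q - 1))
    (C : ℝ)
    (hC : C = sInf {v : ℝ | ∃ x ∈ E, ∃ d : ℝ, c ≤ d ∧ d ≤ R ∧
      (∃ j, j ≠ ι x ∧ (Metric.closedBall x d ∩ f j '' E).Nonempty) ∧
      v = (2 * d) ^ s / (μ (Metric.closedBall x d)).toReal})
    (hC2 : ∃ x₀ ∈ E, ∃ d₀ : ℝ, c ≤ d₀ ∧ d₀ ≤ R ∧
      (∃ j, j ≠ ι x₀ ∧ (Metric.closedBall x₀ d₀ ∩ f j '' E).Nonempty) ∧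
      C = (2 * d₀) ^ s / (μ (Metric.closedBall x₀ d₀)).toReal) :
    |C - sInf {v : ℝ | ∃ x ∈ cloud f p k, ∃ y ∈ cloud f p k,
        (∃ z ∈ cloud f p k ∩ Metric.closedBall x (dist x y), ι z ≠ ι x) ∧
        v = (2 * dist x y) ^ s / (muk f p r s k (Metric.closedBall x (dist x y))).toReal}| ≤
      s * (2 : ℝ) ^ (s + 1) * R *
            (if 1 ≤ s then R ^ (s - 1) else c ^ (s - 1)) *
            rmax ^ (k + 1) / rmin ^ ((q : ℝ) * s) := by
  have hf := continuous_of_sim hr hsim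
  have hmaps : ∀ i, ∀ x ∈ E, f i x ∈ E := fun i x hx => by
    rw [hEinv]; exact Set.mem_iUnion.2 ⟨i, x, hx, rfl⟩
  have hpE := fixed_mem hr hsim hEne hEcpt hmaps hp
  have hdist : ∀ x ∈ E, ∀ y ∈ E, dist x y ≤ R := fun x hx y hy => by
    rw [hR]; exact Metric.dist_le_diam_of_mem hEcpt.isBounded hx hy
  have hrmin0 : 0 < rmin := by obtain ⟨i, hi⟩ := hrmin₁; rw [hi]; exact (hr i).1
  have hrmin1 : rmin ≤ 1 := by obtain ⟨i, hi⟩ := hrmin₁; rw [hi]; exact (hr i).2.le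
  have hrmax0 : 0 < rmax := by obtain ⟨i, hi⟩ := hrmax₁; rw [hi]; exact (hr i).1
  have hR0 : 0 < R := by
    by_contra hneg
    have := mul_nonpos_of_nonpos_of_nonneg (not_lt.1 hneg) (pow_nonneg hrmax0.le (q - 1))
    linarith [hqdef.2]
  have hμEc : μ Eᶜ = 0 := (prob_compl_eq_zero_iff hEcpt.measurableSet).2 hμE
  have hprob : IsProbabilityMeasure (muk f p r s k) := ⟨muk_univ hr hf hsum hp k⟩
  have hcE := cloud_subset (f := f) (p := p) hmaps hpE k
  -- The strong separation condition makes the first letter of a point of `E` unique.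
  have hιuniq : ∀ x ∈ E, ∀ i, x ∈ f i '' E → ι x = i := fun x hx i hi => by
    by_contra hne
    have := hssc _ _ hne
    exact (Set.eq_empty_iff_forall_notMem.1 this) x ⟨hι x hx, hi⟩
  have hcle : ∀ x ∈ E, ∀ y ∈ E, ι x ≠ ι y → c ≤ dist x y := fun x hx y hy hne => by
    rw [hc]
    refine csInf_le ⟨0, ?_⟩ ⟨ι x, ι y, hne, x, hι x hx, y, hι y hy, rfl⟩
    rintro _ ⟨_, _, _, _, _, _, _, rfl⟩
    exact dist_nonneg
  have hδ : ∀ i, ENNReal.ofReal (rmin ^ s) ≤ ENNReal.ofReal (r i ^ s) := fun i =>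
    ENNReal.ofReal_le_ofReal (Real.rpow_le_rpow hrmin0.le (hrmin₂ i) hs.le)
  have hδ1 : ENNReal.ofReal (rmin ^ s) ≤ 1 :=
    ENNReal.ofReal_le_one.2 (Real.rpow_le_one hrmin0.le hrmin1 hs.le)
  set δ : ℝ := rmin ^ ((q : ℝ) * s) with hδdef
  have hδpos : 0 < δ := Real.rpow_pos_of_pos hrmin0 _
  have hδpow : ENNReal.ofReal (rmin ^ s) ^ q = ENNReal.ofReal δ := by
    rw [← ENNReal.ofReal_pow (Real.rpow_nonneg hrmin0.le _), hδdef, mul_comm,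
      Real.rpow_mul_natCast hrmin0.le]
  set ε : ℝ := R * rmax ^ (k + 1) with hεdef
  have hε0 : 0 < ε := by positivity
  have hμlow : ∀ x ∈ E, ∀ d, c ≤ d → δ ≤ (μ (closedBall x d)).toReal := fun x hx d hd => by
    obtain ⟨T, -, hTd, hTm⟩ := measure_lower hr hf hsim hrmax₂ hδ hEcpt hEinv hdist hμE hμself q x hx
    rw [hδpow] at hTm
    exact (ENNReal.ofReal_le_iff_le_toReal (measure_ne_top _ _)).1
      (hTm.trans (measure_mono fun z hz => (hTd z hz).trans (hqdef.1.trans hd)))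
  have hmlow : ∀ x ∈ cloud f p k, ∀ d, c ≤ d → δ ≤ (muk f p r s k (closedBall x d)).toReal :=
    fun x hx d hd => by
    obtain ⟨T, -, hTd, hTm⟩ := muk_lower hδ1 hR0.le hrmax0.le hr hf hsim hrmax₂ hδ hsum hp hpE
      hmaps hEcpt hdist q k x hx
    rw [hδpow] at hTm
    exact (ENNReal.ofReal_le_iff_le_toReal (measure_ne_top _ _)).1
      (hTm.trans (measure_mono fun z hz => (hTd z hz).trans (hqdef.1.trans hd)))
  have hle1 := measure_le_muk hr hf hsim hrmax₂ hp hpE hmaps hdist hμprob hμEc hμself k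
  -- The reverse comparison follows by passing to complements, both measures having mass one.
  have hle2 : ∀ S T : Set (EuclideanSpace ℝ (Fin n)), MeasurableSet S → MeasurableSet T →
      (∀ u ∈ S, u ∈ E → ∀ v ∈ E, dist u v ≤ ε → v ∈ T) → muk f p r s k S ≤ μ T := by
    intro S T hS hT h
    have h1 := hle1 Tᶜ Sᶜ hT.compl hS.compl fun u hu huE v hv hd hvS =>
      hu (h v hvS hv u huE (by rwa [dist_comm]))
    rw [prob_compl_eq_one_sub hT, prob_compl_eq_one_sub hS] at h1
    exact (ENNReal.sub_le_sub_iff_left prob_le_one ENNReal.one_ne_top).1 h1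
  set Q : ℝ := if 1 ≤ s then R ^ (s - 1) else c ^ (s - 1) with hQdef
  have hQ0 : 0 < Q := by rw [hQdef]; split_ifs <;> positivity
  have hRHS : s * (2 : ℝ) ^ (s + 1) * R * Q * rmax ^ (k + 1) / δ
      = 2 ^ s * (s * Q * (2 * ε)) / δ := by
    rw [Real.rpow_add_one (by norm_num), hεdef]; ring
  rw [hRHS]
  -- The common final step: radii `a`, `b ∈ [c, R]` with `b ≤ a + 2 * ε`, and a mass `M ≥ δ`.
  have hquot : ∀ a b M : ℝ, c ≤ a → c ≤ b → b ≤ R → b ≤ a + 2 * ε → δ ≤ M →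
      (2 * b) ^ s / M ≤ (2 * a) ^ s / M + 2 ^ s * (s * Q * (2 * ε)) / δ := by
    intro a b M ha hb hbR hba hM
    have hM0 : 0 < M := hδpos.trans_le hM
    have hnum : (2 * b) ^ s - (2 * a) ^ s ≤ 2 ^ s * (s * Q * (2 * ε)) := by
      rcases le_total a b with hab | hab
      · refine (two_mul_rpow_sub_le hs hcpos ha hab hbR).trans ?_
        refine mul_le_mul_of_nonneg_left ?_ (by positivity)
        exact mul_le_mul_of_nonneg_left (by linarith) (by positivity)
      · have : (2 * b) ^ s ≤ (2 * a) ^ s :=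
          Real.rpow_le_rpow (by linarith) (by linarith) hs.le
        have : 0 ≤ 2 ^ s * (s * Q * (2 * ε)) := by positivity
        linarith
    have h1 : ((2 * b) ^ s - (2 * a) ^ s) / M ≤ 2 ^ s * (s * Q * (2 * ε)) / δ :=
      (div_le_div_of_nonneg_right hnum hM0.le).trans
        (div_le_div_of_nonneg_left (by positivity) hδpos hM)
    rw [sub_div] at h1
    linarith
  set V := {v : ℝ | ∃ x ∈ cloud f p k, ∃ y ∈ cloud f p k,
        (∃ z ∈ cloud f p k ∩ Metric.closedBall x (dist x y), ι z ≠ ι x) ∧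
        v = (2 * dist x y) ^ s / (muk f p r s k (Metric.closedBall x (dist x y))).toReal} with hV
  have hVbdd : BddBelow V := by
    refine ⟨0, ?_⟩
    rintro _ ⟨x, _, y, _, _, rfl⟩
    positivity
  have hup : ∃ v ∈ V, v ≤ C + 2 ^ s * (s * Q * (2 * ε)) / δ := by
    obtain ⟨x₀, hx₀, d₀, hcd, hdR, ⟨j, hj, z₀, hz₀, hz₀j⟩, hCeq⟩ := hC2
    have hz₀E : z₀ ∈ E := by obtain ⟨u, hu, rfl⟩ := hz₀j; exact hmaps j u hu
    have hnear := exists_cloud_near hr hsim hrmax₂ hEinv hp hpE hmaps hdist k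
    obtain ⟨x, hx, hxd, i, hi₀, hi⟩ := hnear x₀ hx₀
    obtain ⟨z, hz, hzd, i', hi'₀, hi'⟩ := hnear z₀ hz₀E
    have hιx : ι x = ι x₀ := by rw [hιuniq x (hcE hx) i hi, hιuniq x₀ hx₀ i hi₀]
    have hιz : ι z = j := by
      rw [hιuniq z (hcE hz) i' hi', ← hιuniq z₀ hz₀E i' hi'₀, hιuniq z₀ hz₀E j hz₀j]
    have hxz : dist x z ≤ d₀ + 2 * ε := by
      have h1 := dist_triangle4 x x₀ z₀ z
      rw [dist_comm x x₀, dist_comm x₀ z₀] at h1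
      have h2 : dist z₀ x₀ ≤ d₀ := hz₀
      linarith
    obtain ⟨y, ⟨hy, hyd⟩, hymax⟩ := Set.exists_max_image
      {y ∈ cloud f p k | dist x y ≤ d₀ + 2 * ε} (fun y => dist x y)
      ((cloud_finite k).subset fun y hy => hy.1) ⟨z, hz, hxz⟩
    have hzy : dist x z ≤ dist x y := hymax z ⟨hz, hxz⟩
    have hne : ι z ≠ ι x := by rw [hιz, hιx]; exact hj
    refine ⟨_, ⟨x, hx, y, hy, ⟨z, ⟨hz, ?_⟩, hne⟩, rfl⟩, ?_⟩
    · rw [mem_closedBall, dist_comm]; exact hzy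
    have hcy : c ≤ dist x y := (hcle x (hcE hx) z (hcE hz) hne.symm).trans hzy
    have hmass : μ (closedBall x₀ d₀) ≤ muk f p r s k (closedBall x (dist x y)) := by
      have h1 : μ (closedBall x₀ d₀) ≤ muk f p r s k (closedBall x (d₀ + 2 * ε)) := by
        refine hle1 _ _ measurableSet_closedBall measurableSet_closedBall ?_
        intro u hu huE v hv hd
        rw [mem_closedBall] at hu ⊢
        have h1 := dist_triangle4 v u x₀ x
        rw [dist_comm v u] at h1
        linarith
      -- By maximality of `dist x y` the larger ball contains no further cloud points.
      have h2 : muk f p r s k (closedBall x (d₀ + 2 * ε) \ closedBall x (dist x y)) = 0 := by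
        refine muk_eq_zero hr hf hp k _
          (measurableSet_closedBall.diff measurableSet_closedBall) ?_
        rintro w hw ⟨hw1, hw2⟩
        rw [mem_closedBall, dist_comm] at hw1 hw2
        exact hw2 (hymax w ⟨hw, hw1⟩)
      exact h1.trans (measure_mono_ae (ae_le_set.2 h2))
    have hmass' := ENNReal.toReal_mono (measure_ne_top _ _) hmass
    have hlow := hμlow x₀ hx₀ d₀ hcd
    have h3 := hquot d₀ (dist x y) _ hcd hcy (hdist x (hcE hx) y (hcE hy)) hyd hlow
    rw [← hCeq] at h3
    refine le_trans ?_ h3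
    exact div_le_div_of_nonneg_left (by positivity) (hδpos.trans_le hlow) hmass'
  have hlo : ∀ v ∈ V, C ≤ v + 2 ^ s * (s * Q * (2 * ε)) / δ := by
    rintro _ ⟨x, hx, y, hy, ⟨z, ⟨hz, hzb⟩, hne⟩, rfl⟩
    have hxE := hcE hx
    have hzE := hcE hz
    rw [mem_closedBall, dist_comm] at hzb
    have hcy : c ≤ dist x y := (hcle x hxE z hzE hne.symm).trans hzb
    have hyR : dist x y ≤ R := hdist x hxE y (hcE hy)
    set d := dist x y with hd
    have hdd : d ≤ min (d + ε) R := le_min (by linarith) hyR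
    have hmass : muk f p r s k (closedBall x d) ≤ μ (closedBall x (min (d + ε) R)) := by
      refine hle2 _ _ measurableSet_closedBall measurableSet_closedBall ?_
      intro u hu huE v hv huv
      rw [mem_closedBall] at hu ⊢
      refine le_min ?_ (hdist v hv x hxE)
      have h1 := dist_triangle v u x
      rw [dist_comm v u] at h1
      linarith
    have hmass' := ENNReal.toReal_mono (measure_ne_top _ _) hmass
    have hlow := hmlow x hx d hcy
    have h3 := hquot d (min (d + ε) R) _ hcy (hcy.trans hdd) (min_le_right _ _)
      ((min_le_left _ _).trans (by linarith)) hlow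
    refine le_trans ?_ h3
    refine le_trans ?_ (div_le_div_of_nonneg_left
      (Real.rpow_nonneg (by linarith) _) (hδpos.trans_le hlow) hmass')
    rw [hC]
    refine csInf_le ⟨0, ?_⟩ ⟨x, hxE, min (d + ε) R, hcy.trans hdd, min_le_right _ _,
      ⟨ι z, hne, z, ?_, hι z hzE⟩, rfl⟩
    · rintro _ ⟨x', _, d', hd', _, _, rfl⟩
      exact div_nonneg (Real.rpow_nonneg (by linarith) _) ENNReal.toReal_nonneg
    · rw [mem_closedBall, dist_comm]; exact hzb.trans hdd
  obtain ⟨v, hvV, hv⟩ := hup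
  have h1 : sInf V ≤ v := csInf_le hVbdd hvV
  have h2 : C - 2 ^ s * (s * Q * (2 * ε)) / δ ≤ sInf V :=
    le_csInf ⟨v, hvV⟩ fun w hw => by linarith [hlo w hw]
  rw [abs_le]
  constructor <;> linarith
end
end
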